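/- Let S₀ > 0, κ > 0, σ > 0, r ∈ ℝ and τ > 0, and set a = σ²κτ/S₀. Then the price of the Asian call at time 0, Call₀ = (S₀/(τσ²))·e^{-rτ} · E[ ( A_{σ²τ} − σ²κτ/S₀ )^+ ], satisfies Call₀ = S₀·e^{-rτ} · [ 1 − κ/S₀ + (σ²κ²τ/S₀²) · E[ (a + A_{τσ²})^{-1} · exp( 2·M_{τσ²}/(a + A_{τσ²}) − 2/a ) ] ]. -/

import Mathlib

open MeasureTheory ProbabilityTheory Real Set

noncomputable section

/-- A standard one-dimensional Brownian motion `B` (with `B 0 = 0`, continuous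
paths, Gaussian increments and independent increments) on a probability space
with measure `P`. -/
structure IsBrownianMotion {Ω : Type*} [MeasurableSpace Ω]
    (P : Measure Ω) (B : ℝ → Ω → ℝ) : Prop where
  isProbabilityMeasure : IsProbabilityMeasure P
  measurable : ∀ t : ℝ, Measurable (B t)
  start : ∀ ω, B 0 ω = 0
  continuous_paths : ∀ ω, Continuous fun t => B t ω
  gaussian_increments : ∀ s t : ℝ, 0 ≤ s → s ≤ t →
    P.map (fun ω => B t ω - B s ω) = gaussianReal 0 (Real.toNNReal (t - s))
  indep_increments : ∀ t : ℕ → ℝ, Monotone t → 0 ≤ t 0 →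
    iIndepFun
      (fun (i : ℕ) (ω : Ω) => B (t (i + 1)) ω - B (t i) ω) P

/-- The exponential martingale `M_t = exp (B_t - t/2)`. -/
def M {Ω : Type*} (B : ℝ → Ω → ℝ) (t : ℝ) (ω : Ω) : ℝ :=
  Real.exp (B t ω - t / 2)

/-- The time integral `A_t = ∫_0^t exp (B_s - s/2) ds`. -/
def A {Ω : Type*} (B : ℝ → Ω → ℝ) (t : ℝ) (ω : Ω) : ℝ :=
  ∫ s in (0 : ℝ)..t, Real.exp (B s ω - s / 2)

/-- The time integral with drift `ν`: `A_t^{(ν)} = ∫_0^t exp (B_s + (ν - 1/2) s) ds`. -/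
def Adrift {Ω : Type*} (B : ℝ → Ω → ℝ) (ν t : ℝ) (ω : Ω) : ℝ :=
  ∫ s in (0 : ℝ)..t, Real.exp (B s ω + (ν - 1 / 2) * s)

variable {Ω : Type*} [MeasurableSpace Ω] (P : MeasureTheory.Measure Ω) (B : ℝ → Ω → ℝ)

/-!
Replacing the log-increments of `M` on a grid of mesh `h` by a tilted Gaussian law amounts to
shifting them, one at a time, by their variance `h`. Telescoping `M_t - 1` over the grid turns this
into a discrete integration by parts formula, and letting `h → 0` gives, for the law of
`(m, x) = (M_t, A_t)`,
`E[(m - 1) G(m, x)] = E[m x ∂ₘG(m, x) + (x² / 2) ∂ₓG(m, x)]`.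
In the coordinates `(m / x², 1 / x)` the vector field `(m x, x² / 2)` is constant and vertical, so
the formula says that the image of the law with density `exp (2 (m + 1) / x)` is invariant under
vertical translations. The translation by `1 / a` carries the half-plane `{1 / x > 0}` to the
exercise region `{x < a}` of the put of strike `a`; it therefore evaluates `E[(a - A_t)⁺]`, and
put-call parity with `E[A_t] = t` gives the call.
-/

section GaussianShift

open scoped NNReal

variable {P}

theorem integral_exp_mul_gaussianReal (μ : ℝ) (v : ℝ≥0) (g : ℝ → ℝ) :
    ∫ x, exp x * g x ∂gaussianReal μ v = exp (μ + v / 2) * ∫ x, g (x + v) ∂gaussianReal μ v := by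
  obtain rfl | hv := eq_or_ne v 0
  · simp
  have hpdf (x : ℝ) : gaussianPDFReal μ v (x + v) * exp (x + v) =
      exp (μ + v / 2) * gaussianPDFReal μ v x := by
    have hv' : (v : ℝ) ≠ 0 := by exact_mod_cast hv
    simp only [gaussianPDFReal]
    rw [mul_assoc, ← exp_add, mul_left_comm, ← exp_add]
    congr 2
    field_simp
    ring
  simp only [integral_gaussianReal_eq_integral_smul hv, smul_eq_mul]
  rw [← integral_add_right_eq_self _ (v : ℝ), ← integral_const_mul]
  refine integral_congr_ae (.of_forall fun x => ?_)
  linear_combination g (x + v) * hpdf x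

theorem integral_exp_mul_of_indepFun [IsFiniteMeasure P] {β : Type*} [MeasurableSpace β]
    {X : Ω → ℝ} {V : Ω → β} {μ : ℝ} {v : ℝ≥0} {C : ℝ} {H : ℝ × β → ℝ}
    (hX : Measurable X) (hV : Measurable V) (hlaw : P.map X = gaussianReal μ v)
    (hXV : IndepFun X V P) (hH : Measurable H) (hC : ∀ p, |H p| ≤ C) :
    ∫ ω, exp (X ω) * H (X ω, V ω) ∂P = exp (μ + v / 2) * ∫ ω, H (X ω + v, V ω) ∂P := by
  have hjoint : P.map (fun ω => (X ω, V ω)) = (gaussianReal μ v).prod (P.map V) := by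
    rw [← hlaw, (indepFun_iff_map_prod_eq_prod_map_map hX.aemeasurable hV.aemeasurable).1 hXV]
  have hexp : Integrable (fun x => exp x) (gaussianReal μ v) := by
    simpa using integrable_exp_mul_gaussianReal (μ := μ) (v := v) 1
  have hleft : Integrable (fun p : ℝ × β => exp p.1 * H p) ((gaussianReal μ v).prod (P.map V)) :=
    (hexp.comp_fst _).mul_bdd (c := C) hH.aestronglyMeasurable (.of_forall hC)
  have hshift : Measurable fun p : ℝ × β => H (p.1 + v, p.2) := hH.comp (by fun_prop)
  have hright : Integrable (fun p : ℝ × β => H (p.1 + v, p.2))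
      ((gaussianReal μ v).prod (P.map V)) :=
    .of_bound hshift.aestronglyMeasurable C (.of_forall fun p => hC _)
  calc ∫ ω, exp (X ω) * H (X ω, V ω) ∂P
      = ∫ p, exp p.1 * H p ∂(gaussianReal μ v).prod (P.map V) := by
        rw [← hjoint, integral_map (by fun_prop) (by fun_prop)]
    _ = exp (μ + v / 2) * ∫ p, H (p.1 + v, p.2) ∂(gaussianReal μ v).prod (P.map V) := by
        rw [integral_prod_symm _ hleft, integral_prod_symm _ hright, ← integral_const_mul]
        exact integral_congr_ae (.of_forall fun y => integral_exp_mul_gaussianReal μ v (H ⟨·, y⟩))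
    _ = exp (μ + v / 2) * ∫ ω, H (X ω + v, V ω) ∂P := by
        rw [← hjoint, integral_map (by fun_prop) hshift.aestronglyMeasurable]

theorem indepFun_update {ι : Type*} [DecidableEq ι] {X : ι → Ω → ℝ} (hX : ∀ i, Measurable (X i))
    (hind : iIndepFun X P) (j : ι) (c : ℝ) :
    IndepFun (X j) (fun ω => Function.update (fun i => X i ω) j c) P := by
  rw [IndepFun_iff_Indep]
  have hdisj := indep_iSup_of_disjoint (fun i => (hX i).comap_le) hind
    (S := {j}) (T := {j}ᶜ) disjoint_compl_right
  refine indep_of_indep_of_le_left (indep_of_indep_of_le_right hdisj ?_) (by simp)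
  refine Measurable.comap_le (@measurable_pi_lambda _ _ _ (_) _ _ fun i => ?_)
  obtain rfl | hij := eq_or_ne i j
  · simp
  · simp only [Function.update_of_ne hij]
    exact (comap_measurable (X i)).mono (le_iSup₂_of_le i hij le_rfl) le_rfl

theorem integral_exp_mul_eq_integral_update [IsFiniteMeasure P] {ι : Type*} [DecidableEq ι]
    {X : ι → Ω → ℝ} {j : ι} {μ : ℝ} {v : ℝ≥0} {C : ℝ} {H : (ι → ℝ) → ℝ}
    (hX : ∀ i, Measurable (X i)) (hind : iIndepFun X P) (hlaw : P.map (X j) = gaussianReal μ v)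
    (hH : Measurable H) (hC : ∀ x, |H x| ≤ C) :
    ∫ ω, exp (X j ω) * H (fun i => X i ω) ∂P =
      exp (μ + v / 2) * ∫ ω, H (Function.update (fun i => X i ω) j (X j ω + v)) ∂P := by
  have hV : Measurable fun ω => Function.update (fun i => X i ω) j (0 : ℝ) := by fun_prop
  have hupd : Measurable fun p : ℝ × (ι → ℝ) => Function.update p.2 j p.1 := by fun_prop
  simpa using integral_exp_mul_of_indepFun (hX j) hV hlaw (indepFun_update hX hind j 0)
    (hH.comp hupd) fun p => hC _

end GaussianShift

section GeometricWalk

variable {P}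

/-- The geometric walk `exp (x₀ + ⋯ + xₙ₋₁)` with log-increments `x`: the exponential martingale
sampled on a grid. -/
def geomWalk (x : ℕ → ℝ) (n : ℕ) : ℝ :=
  exp (∑ i ∈ Finset.range n, x i)

/-- The left Riemann sum, with mesh `h`, of a geometric walk: the time integral on a grid. -/
def walkSum (h : ℝ) (x : ℕ → ℝ) (n : ℕ) : ℝ :=
  ∑ i ∈ Finset.range n, h * geomWalk x i

/-- The discrete counterpart of the pair `(M_t, A_t)`. -/
def walkPair (h : ℝ) (x : ℕ → ℝ) (n : ℕ) : ℝ × ℝ :=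
  (geomWalk x n, walkSum h x n)

/-- The displacement of `walkPair h x n` caused by adding the mesh `h` to the `j`-th
log-increment, for `j < n`. -/
def walkShift (h : ℝ) (x : ℕ → ℝ) (n j : ℕ) : ℝ × ℝ :=
  (exp h - 1) • (geomWalk x n, walkSum h x n - walkSum h x (j + 1))

/-- The adjoint term of the discrete integration by parts formula: the weighted sum of the
responses of `G (walkPair h x n)` to a shift of each log-increment. -/
def walkDeriv (h : ℝ) (G : ℝ × ℝ → ℝ) (x : ℕ → ℝ) (n : ℕ) : ℝ :=
  ∑ j ∈ Finset.range n, geomWalk x j * (G (walkPair h x n + walkShift h x n j) - G (walkPair h x n))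

theorem geomWalk_pos (x : ℕ → ℝ) (n : ℕ) : 0 < geomWalk x n := exp_pos _

theorem geomWalk_succ (x : ℕ → ℝ) (n : ℕ) : geomWalk x (n + 1) = exp (x n) * geomWalk x n := by
  rw [geomWalk, Finset.sum_range_succ, add_comm, exp_add, geomWalk]

theorem walkSum_succ (h : ℝ) (x : ℕ → ℝ) (n : ℕ) :
    walkSum h x (n + 1) = walkSum h x n + h * geomWalk x n :=
  Finset.sum_range_succ _ _

theorem walkSum_mono {h : ℝ} (hh : 0 ≤ h) (x : ℕ → ℝ) : Monotone (walkSum h x) :=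
  monotone_nat_of_le_succ fun n => by
    rw [walkSum_succ]
    have := geomWalk_pos x n
    exact le_add_of_nonneg_right (by positivity)

theorem walkSum_nonneg {h : ℝ} (hh : 0 ≤ h) (x : ℕ → ℝ) (n : ℕ) : 0 ≤ walkSum h x n := by
  simpa [walkSum] using walkSum_mono hh x n.zero_le

theorem mul_geomWalk_le_walkSum {h : ℝ} (hh : 0 ≤ h) (x : ℕ → ℝ) {j n : ℕ} (hj : j < n) :
    h * geomWalk x j ≤ walkSum h x n := by
  have := walkSum_mono hh x (Nat.succ_le_of_lt hj)
  rw [Nat.succ_eq_add_one, walkSum_succ] at this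
  linarith [walkSum_nonneg hh x j]

theorem walkShift_nonneg {h : ℝ} (hh : 0 ≤ h) (x : ℕ → ℝ) {j n : ℕ} (hj : j < n) :
    0 ≤ walkShift h x n j :=
  smul_nonneg (sub_nonneg.2 (one_le_exp hh))
    ⟨(geomWalk_pos x n).le, sub_nonneg.2 (walkSum_mono hh x hj)⟩

theorem geomWalk_update_of_le (x : ℕ → ℝ) (y : ℝ) {j k : ℕ} (hk : k ≤ j) :
    geomWalk (Function.update x j y) k = geomWalk x k := by
  rw [geomWalk, Finset.sum_update_of_notMem (by simpa using hk), geomWalk]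

theorem geomWalk_update_add_of_lt (x : ℕ → ℝ) (h : ℝ) {j k : ℕ} (hk : j < k) :
    geomWalk (Function.update x j (x j + h)) k = exp h * geomWalk x k := by
  rw [geomWalk, Finset.sum_update_of_mem (by simpa using hk), geomWalk, ← exp_add, add_comm (x j),
    add_assoc, ← Finset.sum_eq_add_sum_sdiff_singleton_of_mem (Finset.mem_range.2 hk)]

theorem walkSum_update_add (x : ℕ → ℝ) (h : ℝ) {j n : ℕ} (hj : j < n) :
    walkSum h (Function.update x j (x j + h)) n =
      walkSum h x n + (exp h - 1) * (walkSum h x n - walkSum h x (j + 1)) := by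
  induction n, hj using Nat.le_induction with
  | base =>
    rw [sub_self, mul_zero, add_zero]
    refine Finset.sum_congr rfl fun i hi => ?_
    rw [geomWalk_update_of_le x _ (Nat.lt_succ_iff.1 (Finset.mem_range.1 hi))]
  | succ n hj ih =>
    rw [walkSum_succ, ih, geomWalk_update_add_of_lt x h hj, walkSum_succ h x n]
    ring

theorem walkPair_update_add (x : ℕ → ℝ) (h : ℝ) {j n : ℕ} (hj : j < n) :
    walkPair h (Function.update x j (x j + h)) n = walkPair h x n + walkShift h x n j := by
  ext
  · simp only [walkPair, walkShift, geomWalk_update_add_of_lt x h hj, Prod.fst_add, Prod.smul_fst,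
      smul_eq_mul]
    ring
  · simp only [walkPair, walkShift, walkSum_update_add x h hj, Prod.snd_add, Prod.smul_snd,
      smul_eq_mul]

@[fun_prop]
theorem measurable_geomWalk (n : ℕ) : Measurable fun x => geomWalk x n := by
  unfold geomWalk
  fun_prop

@[fun_prop]
theorem measurable_walkPair (h : ℝ) (n : ℕ) : Measurable fun x => walkPair h x n := by
  unfold walkPair walkSum
  fun_prop

theorem measurable_walkDeriv (h : ℝ) {G : ℝ × ℝ → ℝ} (hG : Measurable G) (n : ℕ) :
    Measurable fun x => walkDeriv h G x n := by
  unfold walkDeriv walkShift walkSum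
  fun_prop

theorem exists_abs_geomWalk_mul_le {h : ℝ} (hh : 0 < h) {G : ℝ × ℝ → ℝ} (hG : Continuous G)
    (hGc : HasCompactSupport G) (n : ℕ) :
    ∃ C, ∀ x, ∀ j ≤ n, |geomWalk x j * G (walkPair h x n)| ≤ C := by
  obtain ⟨C₁, hC₁⟩ := hGc.mul_left (f := Prod.fst) |>.exists_bound_of_continuous
    (continuous_fst.mul hG)
  obtain ⟨C₂, hC₂⟩ := hGc.mul_left (f := Prod.snd) |>.exists_bound_of_continuous
    (continuous_snd.mul hG)
  refine ⟨max C₁ (h⁻¹ * C₂), fun x j hj => ?_⟩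
  obtain rfl | hj := hj.eq_or_lt
  · exact (hC₁ (walkPair h x j)).trans (le_max_left _ _)
  refine le_max_of_le_right ?_
  have hle : |geomWalk x j| ≤ h⁻¹ * |walkSum h x n| := by
    rw [abs_of_pos (geomWalk_pos x j), abs_of_nonneg (walkSum_nonneg hh.le x n),
      le_inv_mul_iff₀ hh]
    exact mul_geomWalk_le_walkSum hh.le x hj
  calc |geomWalk x j * G (walkPair h x n)|
      ≤ h⁻¹ * |walkSum h x n| * |G (walkPair h x n)| := by rw [abs_mul]; gcongr
    _ = h⁻¹ * ‖(walkPair h x n).2 * G (walkPair h x n)‖ := by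
        rw [norm_eq_abs, abs_mul, mul_assoc, walkPair]
    _ ≤ h⁻¹ * C₂ := by gcongr; exact hC₂ _

theorem integrable_geomWalk_mul [IsFiniteMeasure P] {Y : Ω → ℕ → ℝ} (hY : Measurable Y) {h : ℝ}
    (hh : 0 < h) {G : ℝ × ℝ → ℝ} (hG : Continuous G) (hGc : HasCompactSupport G) {j n : ℕ}
    (hj : j ≤ n) : Integrable (fun ω => geomWalk (Y ω) j * G (walkPair h (Y ω) n)) P := by
  obtain ⟨C, hC⟩ := exists_abs_geomWalk_mul_le hh hG hGc n
  have hGm := hG.measurable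
  exact .of_bound (by fun_prop) C (.of_forall fun ω => hC _ j hj)

section

variable [IsFiniteMeasure P] {X : ℕ → Ω → ℝ} {h : ℝ} {G : ℝ × ℝ → ℝ}

theorem integrable_geomWalk_mul_add_walkShift (hh : 0 < h) (hX : ∀ j, Measurable (X j))
    (hG : Continuous G) (hGc : HasCompactSupport G) {j n : ℕ} (hj : j < n) :
    Integrable (fun ω => geomWalk (X · ω) j *
      G (walkPair h (X · ω) n + walkShift h (X · ω) n j)) P := by
  have hupd : Measurable fun ω => Function.update (X · ω) j (X j ω + h) := by fun_prop
  simpa only [walkPair_update_add _ h hj, geomWalk_update_of_le _ _ le_rfl] using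
    integrable_geomWalk_mul hupd hh hG hGc hj.le

theorem integral_geomWalk_succ_mul (hh : 0 < h) (hX : ∀ j, Measurable (X j))
    (hind : iIndepFun X P) {j n : ℕ} (hj : j < n)
    (hlaw : P.map (X j) = gaussianReal (-h / 2) h.toNNReal)
    (hG : Continuous G) (hGc : HasCompactSupport G) :
    ∫ ω, geomWalk (X · ω) (j + 1) * G (walkPair h (X · ω) n) ∂P =
      ∫ ω, geomWalk (X · ω) j * G (walkPair h (X · ω) n + walkShift h (X · ω) n j) ∂P := by
  obtain ⟨C, hC⟩ := exists_abs_geomWalk_mul_le hh hG hGc n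
  have hGm := hG.measurable
  have hm : Measurable fun x => geomWalk x j * G (walkPair h x n) := by fun_prop
  have htilt := integral_exp_mul_eq_integral_update hX hind hlaw hm (hC · j hj.le)
  rw [coe_toNNReal h hh.le, neg_div, neg_add_cancel, exp_zero, one_mul] at htilt
  simpa only [geomWalk_succ, mul_assoc, walkPair_update_add _ h hj,
    geomWalk_update_of_le _ _ le_rfl] using htilt

-- Telescope `mₙ - 1` into the increments `m_j (exp (X j) - 1)`; each factor `exp (X j)` is
-- absorbed by shifting `X j` by its variance `h`.
theorem integral_geomWalk_sub_one_mul (hh : 0 < h) (hX : ∀ j, Measurable (X j))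
    (hind : iIndepFun X P) (hlaw : ∀ j, P.map (X j) = gaussianReal (-h / 2) h.toNNReal)
    (hG : Continuous G) (hGc : HasCompactSupport G) (n : ℕ) :
    ∫ ω, (geomWalk (X · ω) n - 1) * G (walkPair h (X · ω) n) ∂P =
      ∫ ω, walkDeriv h G (X · ω) n ∂P := by
  have hXm : Measurable fun ω i => X i ω := by fun_prop
  have hint (k : ℕ) (hk : k ≤ n) := integrable_geomWalk_mul (P := P) hXm hh hG hGc hk
  have hshift (j : ℕ) (hj : j < n) :=
    integrable_geomWalk_mul_add_walkShift (P := P) hh hX hG hGc hj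
  have htelescope (ω : Ω) : (geomWalk (X · ω) n - 1) * G (walkPair h (X · ω) n) =
      ∑ j ∈ Finset.range n, (geomWalk (X · ω) (j + 1) * G (walkPair h (X · ω) n) -
        geomWalk (X · ω) j * G (walkPair h (X · ω) n)) := by
    rw [Finset.sum_range_sub fun j => geomWalk (X · ω) j * G (walkPair h (X · ω) n)]
    simp [geomWalk, sub_mul]
  simp only [htelescope, walkDeriv, mul_sub]
  rw [integral_finsetSum, integral_finsetSum]
  · refine Finset.sum_congr rfl fun j hj => ?_
    rw [Finset.mem_range] at hj
    rw [integral_sub (hint _ hj) (hint _ hj.le), integral_sub (hshift j hj) (hint _ hj.le),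
      integral_geomWalk_succ_mul hh hX hind hj (hlaw j) hG hGc]
  · intro j hj
    rw [Finset.mem_range] at hj
    exact (hshift j hj).sub (hint _ hj.le)
  · intro j hj
    rw [Finset.mem_range] at hj
    exact (hint _ hj).sub (hint _ hj.le)

end

end GeometricWalk

section PathwiseLimit

open Filter Asymptotics
open scoped Topology NNReal

theorem tendsto_sum_smul_sub_of_hasStrictFDerivAt {E F α ι : Type*} [NormedAddCommGroup E]
    [NormedSpace ℝ E] [NormedAddCommGroup F] [NormedSpace ℝ F] {f : E → F} {f' : E →L[ℝ] F}
    {p d : E} (hf : HasStrictFDerivAt f f' p) {l : Filter α} {s : α → Finset ι} {w : α → ι → ℝ}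
    {q : α → E} {δ : α → ι → E} {η : α → ℝ} (hq : Tendsto q l (𝓝 p)) (hη : Tendsto η l (𝓝 0))
    (hδ : ∀ᶠ a in l, ∀ i ∈ s a, ‖δ a i‖ ≤ η a)
    (hbdd : (fun a => ∑ i ∈ s a, ‖w a i‖ * ‖δ a i‖) =O[l] (fun _ => (1 : ℝ)))
    (hd : Tendsto (fun a => ∑ i ∈ s a, w a i • δ a i) l (𝓝 d)) :
    Tendsto (fun a => ∑ i ∈ s a, w a i • (f (q a + δ a i) - f (q a))) l (𝓝 (f' d)) := by
  have hrem : (fun a => ∑ i ∈ s a, w a i • (f (q a + δ a i) - f (q a) - f' (δ a i))) =o[l]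
      fun a => ∑ i ∈ s a, ‖w a i‖ * ‖δ a i‖ := by
    refine isLittleO_iff.2 fun ε hε => ?_
    obtain ⟨r, hr, hball⟩ := Metric.eventually_nhds_iff_ball.1
      (isLittleO_iff.1 hf.isLittleO hε)
    filter_upwards [hq.eventually (Metric.ball_mem_nhds p (half_pos hr)),
      hη.eventually (gt_mem_nhds (half_pos hr)), hδ] with a hqa hηa hδa
    rw [norm_of_nonneg (by positivity), Finset.mul_sum]
    refine norm_sum_le_of_le _ fun i hi => ?_
    have hnear : (q a + δ a i, q a) ∈ Metric.ball (p, p) r := by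
      have hshift : dist (q a + δ a i) p < r := by
        calc dist (q a + δ a i) p ≤ dist (q a + δ a i) (q a) + dist (q a) p := dist_triangle _ _ _
          _ < r / 2 + r / 2 := by
              rw [dist_self_add_left]
              exact add_lt_add ((hδa i hi).trans_lt hηa) hqa
          _ = r := add_halves r
      exact max_lt hshift ((Metric.mem_ball.1 hqa).trans (half_lt_self hr))
    have := hball _ hnear
    rw [add_sub_cancel_left] at this
    calc ‖w a i • (f (q a + δ a i) - f (q a) - f' (δ a i))‖
        ≤ ‖w a i‖ * (ε * ‖δ a i‖) := by rw [norm_smul]; gcongr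
      _ = ε * (‖w a i‖ * ‖δ a i‖) := by ring
  have hlin := (f'.continuous.tendsto d).comp hd
  have := ((isLittleO_one_iff ℝ).1 (hrem.trans_isBigO hbdd)).add hlin
  rw [zero_add] at this
  refine this.congr fun a => ?_
  simp only [Function.comp_apply, map_sum, map_smul, ← Finset.sum_add_distrib, ← smul_add,
    sub_add_cancel]

theorem norm_walkShift_le {h : ℝ} (hh : 0 ≤ h) (x : ℕ → ℝ) {j n : ℕ} (hj : j < n) :
    ‖walkShift h x n j‖ ≤ (exp h - 1) * ‖walkPair h x n‖ := by
  have hsum := walkSum_nonneg hh x (j + 1)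
  have hmono := walkSum_mono hh x (Nat.succ_le_of_lt hj)
  rw [walkShift, norm_smul, norm_of_nonneg (sub_nonneg.2 (one_le_exp hh))]
  refine mul_le_mul_of_nonneg_left (max_le_max le_rfl ?_) (sub_nonneg.2 (one_le_exp hh))
  rw [norm_of_nonneg (sub_nonneg.2 hmono)]
  exact (sub_le_self _ hsum).trans (le_abs_self _)

theorem sum_geomWalk_mul_norm_walkShift_le {h : ℝ} (hh : 0 < h) (x : ℕ → ℝ) (n : ℕ) :
    ∑ j ∈ Finset.range n, geomWalk x j * ‖walkShift h x n j‖ ≤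
      (exp h - 1) / h * ‖walkPair h x n‖ ^ 2 := by
  have hc : 0 ≤ (exp h - 1) / h := div_nonneg (sub_nonneg.2 (one_le_exp hh.le)) hh.le
  calc ∑ j ∈ Finset.range n, geomWalk x j * ‖walkShift h x n j‖
      ≤ ∑ j ∈ Finset.range n, geomWalk x j * ((exp h - 1) * ‖walkPair h x n‖) := by
        refine Finset.sum_le_sum fun j hj => ?_
        have := norm_walkShift_le hh.le x (Finset.mem_range.1 hj)
        have := geomWalk_pos x j
        gcongr
    _ = (exp h - 1) / h * ‖walkPair h x n‖ * walkSum h x n := by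
        rw [walkSum, ← Finset.sum_mul, ← Finset.mul_sum]
        field_simp
    _ ≤ (exp h - 1) / h * ‖walkPair h x n‖ * ‖walkPair h x n‖ := by
        gcongr
        exact (le_abs_self _).trans (norm_snd_le (walkPair h x n))
    _ = (exp h - 1) / h * ‖walkPair h x n‖ ^ 2 := by ring

theorem walkSum_sq (h : ℝ) (x : ℕ → ℝ) (n : ℕ) :
    walkSum h x n ^ 2 =
      2 * ∑ j ∈ Finset.range n, h * geomWalk x j * (walkSum h x n - walkSum h x (j + 1)) +
        ∑ j ∈ Finset.range n, (h * geomWalk x j) ^ 2 := by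
  induction n with
  | zero => simp [walkSum]
  | succ n ih =>
    have hsplit : ∑ j ∈ Finset.range n, h * geomWalk x j *
        (walkSum h x (n + 1) - walkSum h x (j + 1)) =
        ∑ j ∈ Finset.range n, h * geomWalk x j * (walkSum h x n - walkSum h x (j + 1)) +
          walkSum h x n * (h * geomWalk x n) := by
      simp only [walkSum_succ h x n, add_sub_right_comm, mul_add, Finset.sum_add_distrib,
        ← Finset.sum_mul]
      rfl
    rw [Finset.sum_range_succ, Finset.sum_range_succ, hsplit, sub_self, walkSum_succ]
    linear_combination ih

theorem sum_geomWalk_smul_walkShift {h : ℝ} (hh : h ≠ 0) (x : ℕ → ℝ) (n : ℕ) :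
    ∑ j ∈ Finset.range n, geomWalk x j • walkShift h x n j =
      ((exp h - 1) / h) • (geomWalk x n * walkSum h x n,
        (walkSum h x n ^ 2 - ∑ j ∈ Finset.range n, (h * geomWalk x j) ^ 2) / 2) := by
  have hfst : geomWalk x n * walkSum h x n =
      ∑ j ∈ Finset.range n, h * (geomWalk x j * geomWalk x n) := by
    rw [walkSum, Finset.mul_sum]
    exact Finset.sum_congr rfl fun j _ => by ring
  rw [walkSum_sq h x n, add_sub_cancel_right, mul_div_cancel_left₀ _ two_ne_zero, hfst]
  ext <;>
  · simp only [walkShift, Prod.fst_sum, Prod.snd_sum, Prod.smul_fst, Prod.smul_snd, smul_eq_mul,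
      Finset.mul_sum]
    exact Finset.sum_congr rfl fun j _ => by field_simp

theorem tendsto_exp_sub_one_div {α : Type*} {l : Filter α} {h : α → ℝ} (hne : ∀ᶠ a in l, h a ≠ 0)
    (hh : Tendsto h l (𝓝 0)) : Tendsto (fun a => (exp (h a) - 1) / h a) l (𝓝 1) := by
  have hslope := (hasDerivAt_iff_tendsto_slope_zero.1 (hasDerivAt_exp 0)).comp
    (tendsto_nhdsWithin_iff.2 ⟨hh, hne⟩)
  simpa [Function.comp_def, div_eq_inv_mul] using hslope

theorem tendsto_walkDeriv {G : ℝ × ℝ → ℝ} {G' : ℝ × ℝ →L[ℝ] ℝ} {p : ℝ × ℝ}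
    (hG : HasStrictFDerivAt G G' p) {h : ℕ → ℝ} {x : ℕ → ℕ → ℝ} (hpos : ∀ᶠ n in atTop, 0 < h n)
    (hh : Tendsto h atTop (𝓝 0)) (hp : Tendsto (fun n => walkPair (h n) (x n) n) atTop (𝓝 p))
    (hsq : Tendsto (fun n => ∑ j ∈ Finset.range n, (h n * geomWalk (x n) j) ^ 2) atTop (𝓝 0)) :
    Tendsto (fun n => walkDeriv (h n) G (x n) n) atTop (𝓝 (G' (p.1 * p.2, p.2 ^ 2 / 2))) := by
  have hratio := tendsto_exp_sub_one_div (hpos.mono fun n => ne_of_gt) hh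
  have hfst : Tendsto (fun n => geomWalk (x n) n) atTop (𝓝 p.1) := hp.fst_nhds
  have hsnd : Tendsto (fun n => walkSum (h n) (x n) n) atTop (𝓝 p.2) := hp.snd_nhds
  refine tendsto_sum_smul_sub_of_hasStrictFDerivAt hG hp
    (η := fun n => (exp (h n) - 1) * ‖walkPair (h n) (x n) n‖) ?_ ?_ ?_ ?_
  · simpa using (((continuous_exp.tendsto 0).comp hh).sub_const 1).mul hp.norm
  · filter_upwards [hpos] with n hn j hj
    exact norm_walkShift_le hn.le (x n) (Finset.mem_range.1 hj)
  · refine IsBigO.trans (IsBigO.of_norm_eventuallyLE ?_)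
      ((hratio.mul (hp.norm.pow 2)).isBigO_one ℝ)
    filter_upwards [hpos] with n hn
    rw [norm_of_nonneg (by positivity)]
    simp only [norm_of_nonneg (geomWalk_pos _ _).le]
    exact sum_geomWalk_mul_norm_walkShift_le hn (x n) n
  · have hlim := hratio.smul ((hfst.mul hsnd).prodMk_nhds (((hsnd.pow 2).sub hsq).div_const 2))
    rw [one_smul, sub_zero] at hlim
    refine hlim.congr' ?_
    filter_upwards [hpos] with n hn
    exact (sum_geomWalk_smul_walkShift hn.ne' (x n) n).symm

theorem norm_le_norm_add_of_nonneg {p q : ℝ × ℝ} (hp : 0 ≤ p) (hq : 0 ≤ q) : ‖p‖ ≤ ‖p + q‖ :=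
  max_le_max (abs_le_abs_of_nonneg hp.1 (le_add_of_nonneg_right hq.1))
    (abs_le_abs_of_nonneg hp.2 (le_add_of_nonneg_right hq.2))

theorem norm_walkDeriv_le {G : ℝ × ℝ → ℝ} {K : ℝ≥0} {R h : ℝ} (hG : LipschitzWith K G)
    (hR : ∀ p, R < ‖p‖ → G p = 0) (hh : 0 < h) (x : ℕ → ℝ) (n : ℕ) :
    ‖walkDeriv h G x n‖ ≤ K * (exp h * R ^ 2) := by
  by_cases hp : R < ‖walkPair h x n‖
  · have hvanish : walkDeriv h G x n = 0 := by
      refine Finset.sum_eq_zero fun j hj => ?_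
      have hpair : 0 ≤ walkPair h x n := ⟨(geomWalk_pos x n).le, walkSum_nonneg hh.le x n⟩
      have hshift := walkShift_nonneg hh.le x (Finset.mem_range.1 hj)
      have hlarge := hp.trans_le (norm_le_norm_add_of_nonneg hpair hshift)
      rw [hR _ hp, hR _ hlarge, sub_zero, mul_zero]
    rw [hvanish, norm_zero]
    positivity
  have hexp : (exp h - 1) / h ≤ exp h := by
    rw [div_le_iff₀ hh]
    nlinarith [add_one_le_exp (-h), exp_pos h, exp_neg h, mul_inv_cancel₀ (exp_pos h).ne']
  calc ‖walkDeriv h G x n‖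
      ≤ ∑ j ∈ Finset.range n, geomWalk x j * (K * ‖walkShift h x n j‖) := by
        refine norm_sum_le_of_le _ fun j _ => ?_
        rw [norm_mul, norm_of_nonneg (geomWalk_pos x j).le]
        refine mul_le_mul_of_nonneg_left ?_ (geomWalk_pos x j).le
        simpa [dist_eq_norm] using
          hG.dist_le_mul (walkPair h x n + walkShift h x n j) (walkPair h x n)
    _ = K * ∑ j ∈ Finset.range n, geomWalk x j * ‖walkShift h x n j‖ := by
        rw [Finset.mul_sum]
        exact Finset.sum_congr rfl fun j _ => by ring
    _ ≤ K * (exp h * R ^ 2) := by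
        gcongr
        refine (sum_geomWalk_mul_norm_walkShift_le hh x n).trans ?_
        gcongr
        exact not_lt.1 hp

theorem norm_mul_sub_integral_le {f : ℝ → ℝ} (hf : Continuous f) {a b ε : ℝ} (hab : a ≤ b)
    (hosc : ∀ s ∈ Icc a b, ‖f a - f s‖ ≤ ε) :
    ‖(b - a) * f a - ∫ s in a..b, f s‖ ≤ ε * (b - a) := by
  have hconst : (b - a) * f a = ∫ _ in a..b, f a := by
    rw [intervalIntegral.integral_const, smul_eq_mul]
  rw [hconst, ← intervalIntegral.integral_sub (by simp) (hf.intervalIntegrable _ _)]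
  refine (intervalIntegral.norm_integral_le_of_norm_le_const fun s hs => ?_).trans_eq
    (by rw [abs_of_nonneg (sub_nonneg.2 hab)])
  rw [uIoc_of_le hab] at hs
  exact hosc s (Ioc_subset_Icc_self hs)

theorem norm_riemannSum_sub_integral_le {f : ℝ → ℝ} (hf : Continuous f) {h ε : ℝ} (hh : 0 ≤ h)
    (n : ℕ) (hosc : ∀ x ∈ Icc 0 (n * h), ∀ y ∈ Icc 0 (n * h), dist x y ≤ h → dist (f x) (f y) ≤ ε) :
    ‖∑ j ∈ Finset.range n, h * f (j * h) - ∫ s in 0..n * h, f s‖ ≤ ε * (n * h) := by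
  have hcell (j : ℕ) (hj : j < n) :
      ‖h * f (j * h) - ∫ s in j * h..(j + 1 : ℕ) * h, f s‖ ≤ ε * h := by
    have hlen : (j + 1 : ℕ) * h - j * h = h := by push_cast; ring
    have hleft : 0 ≤ j * h := by positivity
    have hright : (j + 1 : ℕ) * h ≤ n * h := by gcongr; exact hj
    have hbound := norm_mul_sub_integral_le hf (a := j * h) (b := (j + 1 : ℕ) * h) (ε := ε)
      (by linarith) fun s hs => by
        rw [← dist_eq_norm]
        refine hosc _ ⟨hleft, by linarith⟩ _ ⟨hleft.trans hs.1, hs.2.trans hright⟩ ?_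
        rw [dist_comm, dist_eq, abs_of_nonneg (by linarith [hs.1])]
        linarith [hs.2]
    rwa [hlen] at hbound
  have hsum := intervalIntegral.sum_integral_adjacent_intervals (μ := volume) (f := f)
    (a := fun j : ℕ => j * h) (n := n) fun j _ => hf.intervalIntegrable _ _
  rw [Nat.cast_zero, zero_mul] at hsum
  rw [← hsum, ← Finset.sum_sub_distrib]
  calc _ ≤ ∑ _ ∈ Finset.range n, ε * h :=
        norm_sum_le_of_le _ fun j hj => hcell j (Finset.mem_range.1 hj)
    _ = ε * (n * h) := by rw [Finset.sum_const, Finset.card_range, nsmul_eq_mul, mul_left_comm]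

theorem tendsto_riemannSum {f : ℝ → ℝ} (hf : Continuous f) {t : ℝ} (ht : 0 ≤ t) :
    Tendsto (fun n : ℕ => ∑ j ∈ Finset.range n, t / n * f (j * (t / n))) atTop
      (𝓝 (∫ s in 0..t, f s)) := by
  rw [Metric.tendsto_nhds]
  intro ε hε
  obtain ⟨δ, hδ, huc⟩ := Metric.uniformContinuousOn_iff_le.1
    (isCompact_Icc.uniformContinuousOn_of_continuous (hf.continuousOn (s := Icc 0 t)))
    (ε / (t + 1)) (by positivity)
  filter_upwards [(tendsto_const_div_atTop_nhds_zero_nat t).eventually (gt_mem_nhds hδ),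
    eventually_ne_atTop 0] with n hmesh hn
  have hlength : n * (t / n) = t := mul_div_cancel₀ t (by exact_mod_cast hn)
  have hbound := norm_riemannSum_sub_integral_le hf (h := t / n) (ε := ε / (t + 1)) (by positivity)
    n (by rw [hlength]; exact fun x hx y hy hxy => huc x hx y hy (hxy.trans hmesh.le))
  rw [hlength] at hbound
  calc _ ≤ ε / (t + 1) * t := hbound
    _ = ε * (t / (t + 1)) := by ring
    _ < ε := mul_lt_of_lt_one_right hε ((div_lt_one (by positivity)).2 (lt_add_one t))

end PathwiseLimit

/-- The integration by parts formula satisfied by the law of `(M_t, A_t)`: multiplication by `m - 1`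
is adjoint to differentiation along the vector field `(m x, x² / 2)`. -/
def HasIntegrationByParts (μ : Measure (ℝ × ℝ)) : Prop :=
  ∀ G : ℝ × ℝ → ℝ, ContDiff ℝ 1 G → HasCompactSupport G →
    ∫ p, (p.1 - 1) * G p ∂μ = ∫ p, fderiv ℝ G p (p.1 * p.2, p.2 ^ 2 / 2) ∂μ

section BrownianMotion

open Filter
open scoped Topology

variable {P B}

/-- The increments of `log M_t = B_t - t / 2` on the grid `h ℕ`. -/
def logIncr (B : ℝ → Ω → ℝ) (h : ℝ) (j : ℕ) (ω : Ω) : ℝ :=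
  B ((j + 1 : ℕ) * h) ω - B (j * h) ω - h / 2

namespace IsBrownianMotion

theorem measurable_logIncr (hB : IsBrownianMotion P B) (h : ℝ) (j : ℕ) :
    Measurable (logIncr B h j) :=
  ((hB.measurable _).sub (hB.measurable _)).sub_const _

theorem iIndepFun_logIncr (hB : IsBrownianMotion P B) {h : ℝ} (hh : 0 ≤ h) :
    iIndepFun (logIncr B h) P := by
  have hmono : Monotone fun j : ℕ => j * h := Nat.mono_cast.mul_const hh
  exact (hB.indep_increments _ hmono (by simp)).comp (fun _ y => y - h / 2) fun _ => by fun_prop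

theorem map_logIncr (hB : IsBrownianMotion P B) {h : ℝ} (hh : 0 ≤ h) (j : ℕ) :
    P.map (logIncr B h j) = gaussianReal (-h / 2) h.toNNReal := by
  have hlaw := hB.gaussian_increments (j * h) ((j + 1 : ℕ) * h) (by positivity) (by gcongr; simp)
  have hlen : (j + 1 : ℕ) * h - j * h = h := by push_cast; ring
  have hmeas : Measurable fun ω => B ((j + 1 : ℕ) * h) ω - B (j * h) ω :=
    (hB.measurable _).sub (hB.measurable _)
  rw [hlen] at hlaw
  rw [neg_div, ← zero_sub, ← gaussianReal_map_sub_const, ← hlaw,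
    Measure.map_map (by fun_prop) hmeas]
  rfl

theorem geomWalk_logIncr (hB : IsBrownianMotion P B) (h : ℝ) (n : ℕ) (ω : Ω) :
    geomWalk (logIncr B h · ω) n = M B (n * h) ω := by
  simp only [geomWalk, logIncr, M, Finset.sum_sub_distrib, Finset.sum_const, Finset.card_range,
    Finset.sum_range_sub fun j : ℕ => B (j * h) ω, nsmul_eq_mul, Nat.cast_zero, zero_mul, hB.start]
  ring_nf

theorem continuous_M (hB : IsBrownianMotion P B) (ω : Ω) : Continuous fun t => M B t ω := by
  have := hB.continuous_paths ω
  unfold M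
  fun_prop

theorem measurable_M (hB : IsBrownianMotion P B) (t : ℝ) : Measurable (M B t) :=
  ((hB.measurable t).sub_const _).exp

theorem tendsto_walkSum (hB : IsBrownianMotion P B) {t : ℝ} (ht : 0 ≤ t) (ω : Ω) :
    Tendsto (fun n : ℕ => walkSum (t / n) (logIncr B (t / n) · ω) n) atTop (𝓝 (A B t ω)) := by
  simp only [walkSum, hB.geomWalk_logIncr]
  exact tendsto_riemannSum (hB.continuous_M ω) ht

theorem tendsto_walkPair (hB : IsBrownianMotion P B) {t : ℝ} (ht : 0 ≤ t) (ω : Ω) :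
    Tendsto (fun n : ℕ => walkPair (t / n) (logIncr B (t / n) · ω) n) atTop
      (𝓝 (M B t ω, A B t ω)) := by
  refine (tendsto_const_nhds.congr' ?_).prodMk_nhds (hB.tendsto_walkSum ht ω)
  filter_upwards [eventually_ne_atTop 0] with n hn
  rw [hB.geomWalk_logIncr, mul_div_cancel₀ t (by exact_mod_cast hn)]

theorem tendsto_sum_sq (hB : IsBrownianMotion P B) {t : ℝ} (ht : 0 ≤ t) (ω : Ω) :
    Tendsto (fun n : ℕ => ∑ j ∈ Finset.range n,
      (t / n * geomWalk (logIncr B (t / n) · ω) j) ^ 2) atTop (𝓝 0) := by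
  have hsum := (tendsto_const_div_atTop_nhds_zero_nat t).mul
    (tendsto_riemannSum ((hB.continuous_M ω).pow 2) ht)
  rw [zero_mul] at hsum
  refine hsum.congr fun n => ?_
  rw [Finset.mul_sum]
  exact Finset.sum_congr rfl fun j _ => by rw [hB.geomWalk_logIncr, Pi.pow_apply]; ring

theorem measurable_A (hB : IsBrownianMotion P B) {t : ℝ} (ht : 0 ≤ t) : Measurable (A B t) := by
  refine measurable_of_tendsto_metrizable (fun n => ?_)
    (tendsto_pi_nhds.2 fun ω => hB.tendsto_walkSum ht ω)
  have hX : Measurable fun ω j => logIncr B (t / n) j ω :=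
    measurable_pi_lambda _ (hB.measurable_logIncr _)
  exact ((measurable_walkPair (t / n) n).comp hX).snd

theorem measurable_M_A (hB : IsBrownianMotion P B) {t : ℝ} (ht : 0 ≤ t) :
    Measurable fun ω => (M B t ω, A B t ω) :=
  (hB.measurable_M t).prodMk (hB.measurable_A ht)

theorem tendsto_integral_geomWalk_sub_one_mul (hB : IsBrownianMotion P B) {t : ℝ} (ht : 0 ≤ t)
    {G : ℝ × ℝ → ℝ} (hG : Continuous G) (hGc : HasCompactSupport G) :
    Tendsto (fun n : ℕ => ∫ ω, (geomWalk (logIncr B (t / n) · ω) n - 1) *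
        G (walkPair (t / n) (logIncr B (t / n) · ω) n) ∂P) atTop
      (𝓝 (∫ ω, (M B t ω - 1) * G (M B t ω, A B t ω) ∂P)) := by
  have := hB.isProbabilityMeasure
  have hcont : Continuous fun p : ℝ × ℝ => (p.1 - 1) * G p := by fun_prop
  obtain ⟨C, hC⟩ := hGc.mul_left (f := fun p => p.1 - 1) |>.exists_bound_of_continuous hcont
  refine tendsto_integral_of_dominated_convergence (fun _ => C) (fun n => ?_)
    (integrable_const C) (fun n => .of_forall fun ω => hC (walkPair _ _ n))
    (.of_forall fun ω => (hcont.tendsto _).comp (hB.tendsto_walkPair ht ω))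
  have hX : Measurable fun ω j => logIncr B (t / n) j ω :=
    measurable_pi_lambda _ (hB.measurable_logIncr _)
  exact (hcont.measurable.comp ((measurable_walkPair (t / n) n).comp hX)).aestronglyMeasurable

theorem tendsto_integral_walkDeriv (hB : IsBrownianMotion P B) {t : ℝ} (ht : 0 < t)
    {G : ℝ × ℝ → ℝ} (hG : ContDiff ℝ 1 G) (hGc : HasCompactSupport G) :
    Tendsto (fun n : ℕ => ∫ ω, walkDeriv (t / n) G (logIncr B (t / n) · ω) n ∂P) atTop
      (𝓝 (∫ ω, fderiv ℝ G (M B t ω, A B t ω) (M B t ω * A B t ω, A B t ω ^ 2 / 2) ∂P)) := by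
  have := hB.isProbabilityMeasure
  obtain ⟨K, hK⟩ := hG.lipschitzWith_of_hasCompactSupport hGc one_ne_zero
  obtain ⟨R, hR⟩ := hGc.isCompact.isBounded.subset_closedBall 0
  have hR' (p : ℝ × ℝ) (hp : R < ‖p‖) : G p = 0 := by
    by_contra hne
    exact hp.not_ge (mem_closedBall_zero_iff.1 (hR (subset_tsupport G hne)))
  have hmesh : ∀ᶠ n : ℕ in atTop, 0 < t / n ∧ t / n ≤ t := by
    filter_upwards [eventually_ge_atTop 1] with n hn
    have hn' : (1 : ℝ) ≤ n := by exact_mod_cast hn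
    exact ⟨by positivity, div_le_self ht.le hn'⟩
  refine tendsto_integral_filter_of_dominated_convergence (fun _ => K * (exp t * R ^ 2))
    (.of_forall fun n => ?_) ?_ (integrable_const _) (.of_forall fun ω => ?_)
  · have hX : Measurable fun ω j => logIncr B (t / n) j ω :=
      measurable_pi_lambda _ (hB.measurable_logIncr _)
    exact ((measurable_walkDeriv _ hG.continuous.measurable n).comp hX).aestronglyMeasurable
  · filter_upwards [hmesh] with n hn
    refine .of_forall fun ω => (norm_walkDeriv_le hK hR' hn.1 _ n).trans ?_
    gcongr
    exact hn.2
  · exact tendsto_walkDeriv (hG.contDiffAt.hasStrictFDerivAt one_ne_zero)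
      (hmesh.mono fun n hn => hn.1) (tendsto_const_div_atTop_nhds_zero_nat t)
      (hB.tendsto_walkPair ht.le ω) (hB.tendsto_sum_sq ht.le ω)

theorem hasIntegrationByParts (hB : IsBrownianMotion P B) {t : ℝ} (ht : 0 < t) :
    HasIntegrationByParts (P.map fun ω => (M B t ω, A B t ω)) := by
  intro G hG hGc
  have := hB.isProbabilityMeasure
  have hdiscrete : ∀ᶠ n : ℕ in atTop, ∫ ω, (geomWalk (logIncr B (t / n) · ω) n - 1) *
        G (walkPair (t / n) (logIncr B (t / n) · ω) n) ∂P =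
      ∫ ω, walkDeriv (t / n) G (logIncr B (t / n) · ω) n ∂P := by
    filter_upwards [eventually_gt_atTop 0] with n hn
    have hh : 0 < t / n := by positivity
    exact integral_geomWalk_sub_one_mul hh (hB.measurable_logIncr _) (hB.iIndepFun_logIncr hh.le)
      (hB.map_logIncr hh.le) hG.continuous hGc n
  have hcont : Continuous fun p : ℝ × ℝ => fderiv ℝ G p (p.1 * p.2, p.2 ^ 2 / 2) :=
    (hG.continuous_fderiv one_ne_zero).clm_apply (by fun_prop)
  have hmeas := (hB.measurable_M_A ht.le).aemeasurable (μ := P)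
  have hGcont := hG.continuous
  rw [integral_map hmeas (by fun_prop), integral_map hmeas hcont.aestronglyMeasurable]
  exact tendsto_nhds_unique_of_eventuallyEq
    (hB.tendsto_integral_geomWalk_sub_one_mul ht.le hG.continuous hGc)
    (hB.tendsto_integral_walkDeriv ht hG hGc) hdiscrete

end IsBrownianMotion

end BrownianMotion

section ReciprocalCoordinates

open Filter
open scoped Topology

/-- The coordinates `(m / x², 1 / x)`, in which the vector field `(m x, x² / 2)` of
`HasIntegrationByParts` becomes the constant field `(0, -1/2)`. -/
def recipCoord (p : ℝ × ℝ) : ℝ × ℝ :=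
  (p.1 / p.2 ^ 2, p.2⁻¹)

/-- A density with logarithmic derivative `m - 1` along the vector field `(m x, x² / 2)`. -/
def invariantWeight (p : ℝ × ℝ) : ℝ :=
  exp (2 * (p.1 + 1) / p.2)

theorem recipCoord_recipCoord {p : ℝ × ℝ} (hp : p.2 ≠ 0) : recipCoord (recipCoord p) = p := by
  ext <;> simp only [recipCoord] <;> field_simp

theorem contDiffAt_recipCoord {p : ℝ × ℝ} (hp : p.2 ≠ 0) : ContDiffAt ℝ 1 recipCoord p :=
  (contDiffAt_fst.div (contDiffAt_snd.pow 2) (pow_ne_zero 2 hp)).prodMk (contDiffAt_snd.inv hp)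

theorem contDiffAt_invariantWeight {p : ℝ × ℝ} (hp : p.2 ≠ 0) :
    ContDiffAt ℝ 1 invariantWeight p :=
  ((contDiffAt_const.mul (contDiffAt_fst.add contDiffAt_const)).div contDiffAt_snd hp).exp

@[fun_prop]
theorem measurable_recipCoord : Measurable recipCoord := by
  unfold recipCoord
  fun_prop

@[fun_prop]
theorem measurable_invariantWeight : Measurable invariantWeight := by
  unfold invariantWeight
  fun_prop

theorem hasDerivAt_const_add_mul (a b s : ℝ) : HasDerivAt (fun s : ℝ => a + s * b) b s := by
  simpa using ((hasDerivAt_id s).mul_const b).const_add a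

theorem hasDerivAt_recipCoord_add_smul {p : ℝ × ℝ} (hp : p.2 ≠ 0) :
    HasDerivAt (fun s : ℝ => recipCoord (p + s • (p.1 * p.2, p.2 ^ 2 / 2))) (-(1 / 2 : ℝ) • (0, 1))
      0 := by
  have hm := hasDerivAt_const_add_mul p.1 (p.1 * p.2) 0
  have hx := hasDerivAt_const_add_mul p.2 (p.2 ^ 2 / 2) 0
  refine ((hm.fun_div (hx.fun_pow 2) (by simpa)).prodMk (hx.fun_inv (by simpa))).congr_deriv ?_
  ext
  · suffices p.1 * p.2 * p.2 ^ 2 - p.1 * (2 * p.2 * (p.2 ^ 2 / 2)) = 0 by simp [this]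
    ring
  · simp only [zero_mul, add_zero, Prod.smul_snd, smul_eq_mul, mul_one]
    field_simp

theorem hasDerivAt_invariantWeight_add_smul {p : ℝ × ℝ} (hp : p.2 ≠ 0) :
    HasDerivAt (fun s : ℝ => invariantWeight (p + s • (p.1 * p.2, p.2 ^ 2 / 2)))
      ((p.1 - 1) * invariantWeight p) 0 := by
  have hm := hasDerivAt_const_add_mul p.1 (p.1 * p.2) 0
  have hx := hasDerivAt_const_add_mul p.2 (p.2 ^ 2 / 2) 0
  refine (((hm.add_const 1).const_mul 2).fun_div hx (by simpa)).exp.congr_deriv ?_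
  simp only [zero_mul, add_zero, invariantWeight]
  field_simp
  ring

variable {g : ℝ × ℝ → ℝ}

theorem contDiff_invariantWeight_mul_comp (hg : ContDiff ℝ 1 g) (hgc : HasCompactSupport g)
    (hsupp : tsupport g ⊆ {q | 0 < q.2}) :
    ContDiff ℝ 1 fun p => invariantWeight p * g (recipCoord p) := by
  rw [contDiff_iff_contDiffAt]
  intro p
  by_cases hp : p.2 = 0
  · obtain ⟨R, hR⟩ := hgc.isCompact.isBounded.subset_closedBall 0
    have hzero : ∀ᶠ p' : ℝ × ℝ in 𝓝 p, p'.2 * R < 1 :=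
      (isOpen_lt (by fun_prop) continuous_const).mem_nhds (by simp [hp])
    refine (contDiffAt_const (c := (0 : ℝ))).congr_of_eventuallyEq (hzero.mono fun p' hp' => ?_)
    rw [mul_eq_zero]
    refine .inr (image_eq_zero_of_notMem_tsupport fun hmem => ?_)
    have hpos : 0 < p'.2 := inv_pos.1 (hsupp hmem)
    have hle : p'.2⁻¹ ≤ R := (le_abs_self _).trans
      ((norm_snd_le (recipCoord p')).trans (mem_closedBall_zero_iff.1 (hR hmem)))
    exact hp'.not_ge ((inv_le_iff_one_le_mul₀' hpos).1 hle)
  · exact (contDiffAt_invariantWeight hp).mul (hg.contDiffAt.comp p (contDiffAt_recipCoord hp))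

theorem hasCompactSupport_invariantWeight_mul_comp (hgc : HasCompactSupport g)
    (hsupp : tsupport g ⊆ {q | 0 < q.2}) :
    HasCompactSupport fun p => invariantWeight p * g (recipCoord p) := by
  have hcont : ContinuousOn recipCoord (tsupport g) := fun q hq =>
    (contDiffAt_recipCoord (hsupp hq).ne').continuousAt.continuousWithinAt
  refine HasCompactSupport.intro (hgc.isCompact.image_of_continuousOn hcont) fun p hp => ?_
  rw [mul_eq_zero]
  refine .inr (image_eq_zero_of_notMem_tsupport fun hmem => hp ⟨_, hmem, ?_⟩)
  exact recipCoord_recipCoord (inv_pos.1 (hsupp hmem)).ne'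

theorem sub_one_mul_sub_fderiv_eq (hg : ContDiff ℝ 1 g) (hgc : HasCompactSupport g)
    (hsupp : tsupport g ⊆ {q | 0 < q.2}) {p : ℝ × ℝ} (hp : p.2 ≠ 0) :
    (p.1 - 1) * (invariantWeight p * g (recipCoord p)) -
        fderiv ℝ (fun p => invariantWeight p * g (recipCoord p)) p (p.1 * p.2, p.2 ^ 2 / 2) =
      invariantWeight p * fderiv ℝ g (recipCoord p) (0, 1) / 2 := by
  have hG := (contDiff_invariantWeight_mul_comp hg hgc hsupp).differentiable one_ne_zero p
  have hgd := (hg.differentiable one_ne_zero (recipCoord p)).hasFDerivAt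
  have hcomp : HasDerivAt (fun s : ℝ => g (recipCoord (p + s • (p.1 * p.2, p.2 ^ 2 / 2))))
      (fderiv ℝ g (recipCoord p) (-(1 / 2 : ℝ) • (0, 1))) 0 :=
    HasFDerivAt.comp_hasDerivAt (0 : ℝ) (by simpa using hgd) (hasDerivAt_recipCoord_add_smul hp)
  have hprod := (hasDerivAt_invariantWeight_add_smul hp).fun_mul hcomp
  have huniq := hG.hasFDerivAt.hasLineDerivAt (p.1 * p.2, p.2 ^ 2 / 2)
  rw [huniq.unique hprod, map_smul]
  simp only [zero_smul, add_zero, smul_eq_mul]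
  ring

end ReciprocalCoordinates

section Invariance

open Filter
open scoped Topology

variable {μ : Measure (ℝ × ℝ)} {g : ℝ × ℝ → ℝ} {c : ℝ}

theorem HasIntegrationByParts.integral_fderiv_eq_zero [IsFiniteMeasureOnCompacts μ]
    (hμ : HasIntegrationByParts μ) (hpos : ∀ᵐ p ∂μ, 0 < p.2) (hg : ContDiff ℝ 1 g)
    (hgc : HasCompactSupport g) (hsupp : tsupport g ⊆ {q | 0 < q.2}) :
    ∫ p, invariantWeight p * fderiv ℝ g (recipCoord p) (0, 1) ∂μ = 0 := by
  set G : ℝ × ℝ → ℝ := fun p => invariantWeight p * g (recipCoord p) with hGdef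
  have hG : ContDiff ℝ 1 G := contDiff_invariantWeight_mul_comp hg hgc hsupp
  have hGc : HasCompactSupport G := hasCompactSupport_invariantWeight_mul_comp hgc hsupp
  have hGcont := hG.continuous
  have hmul : Integrable (fun p => (p.1 - 1) * G p) μ :=
    Continuous.integrable_of_hasCompactSupport (by fun_prop) hGc.mul_left
  have hderiv : Integrable (fun p => fderiv ℝ G p (p.1 * p.2, p.2 ^ 2 / 2)) μ := by
    refine Continuous.integrable_of_hasCompactSupport
      ((hG.continuous_fderiv one_ne_zero).clm_apply (by fun_prop)) ?_
    exact (hGc.fderiv ℝ).mono fun p hp h0 => hp (by simp [h0])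
  calc ∫ p, invariantWeight p * fderiv ℝ g (recipCoord p) (0, 1) ∂μ
      = ∫ p, 2 * ((p.1 - 1) * G p - fderiv ℝ G p (p.1 * p.2, p.2 ^ 2 / 2)) ∂μ := by
        refine integral_congr_ae (hpos.mono fun p hp => ?_)
        simp only [hGdef, sub_one_mul_sub_fderiv_eq hg hgc hsupp hp.ne']
        ring
    _ = 0 := by
        rw [integral_const_mul, integral_sub hmul hderiv, hμ G hG hGc, sub_self, mul_zero]

/-- The integral of `g` over the vertical segments `{z} × [y - c, y]`. -/
def verticalIntegral (g : ℝ × ℝ → ℝ) (c : ℝ) (q : ℝ × ℝ) : ℝ :=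
  ∫ s in 0..c, g (q - (0, s))

-- The vertical integral is a convolution with a one-dimensional measure carried by the second axis.
theorem contDiff_verticalIntegral (hg : ContDiff ℝ 1 g) (hgc : HasCompactSupport g) (hc : 0 ≤ c) :
    ContDiff ℝ 1 (verticalIntegral g c) := by
  have hemb : Measurable fun s : ℝ => ((0, s) : ℝ × ℝ) := by fun_prop
  let ν : Measure (ℝ × ℝ) := (volume.restrict (Ioc 0 c)).map fun s => (0, s)
  have hgcont := hg.continuous
  have hconv : verticalIntegral g c =
      convolution (fun _ => (1 : ℝ)) g (ContinuousLinearMap.lsmul ℝ ℝ) ν := by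
    ext q
    rw [verticalIntegral, intervalIntegral.integral_of_le hc, convolution,
      integral_map hemb.aemeasurable (by fun_prop)]
    simp only [ContinuousLinearMap.lsmul_apply, smul_eq_mul, one_mul]
  rw [hconv]
  exact hgc.contDiff_convolution_right (n := 1) _ (locallyIntegrable_const 1) hg

theorem fderiv_verticalIntegral_apply (hg : ContDiff ℝ 1 g) (hgc : HasCompactSupport g)
    (hc : 0 ≤ c) (q : ℝ × ℝ) :
    fderiv ℝ (verticalIntegral g c) q (0, 1) = g q - g (q - (0, c)) := by
  have hgcont := hg.continuous
  have hline : Continuous fun s : ℝ => g (q + (0, s)) := by fun_prop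
  have hprim (u : ℝ) : HasDerivAt (fun y => ∫ s in 0..y, g (q + (0, s))) (g (q + (0, u))) u :=
    intervalIntegral.integral_hasDerivAt_right (hline.intervalIntegrable _ _)
      (hline.stronglyMeasurableAtFilter _ _) hline.continuousAt
  have htop : HasDerivAt (fun y => ∫ s in 0..y, g (q + (0, s))) (g q) 0 := by
    simpa [← Prod.zero_eq_mk] using hprim 0
  have hbot : HasDerivAt (fun y => ∫ s in 0..(y - c), g (q + (0, s))) (g (q - (0, c))) 0 := by
    have hshift : q - (0, c) = q + (0, 0 - c) := by ext <;> simp [sub_eq_add_neg]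
    rw [hshift]
    exact HasDerivAt.comp_sub_const 0 c (hprim (0 - c))
  have hdiff : HasDerivAt (fun y : ℝ => verticalIntegral g c (q + y • ((0, 1) : ℝ × ℝ)))
      (g q - g (q - (0, c))) 0 := by
    refine (htop.fun_sub hbot).congr_of_eventuallyEq (.of_forall fun y => ?_)
    have hreflect := intervalIntegral.integral_comp_sub_left (a := 0) (b := c)
      (fun s => g (q + (0, s))) y
    rw [sub_zero] at hreflect
    simp only
    rw [intervalIntegral.integral_interval_sub_left (hline.intervalIntegrable _ _)
      (hline.intervalIntegrable _ _), ← hreflect]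
    simp [verticalIntegral, add_sub_assoc]
  have hfd := (contDiff_verticalIntegral hg hgc hc).differentiable one_ne_zero q
  exact (hfd.hasFDerivAt.hasLineDerivAt (0, 1)).unique hdiff

theorem support_verticalIntegral_subset (hc : 0 ≤ c) :
    Function.support (verticalIntegral g c) ⊆
      (fun x : (ℝ × ℝ) × ℝ => x.1 + (0, x.2)) '' (tsupport g ×ˢ Icc 0 c) := by
  intro q hq
  by_contra hnot
  refine hq (intervalIntegral.integral_zero_ae (.of_forall fun s hs => ?_))
  refine image_eq_zero_of_notMem_tsupport fun hmem => hnot ⟨(q - (0, s), s), ⟨hmem, ?_⟩, by simp⟩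
  rw [uIoc_of_le hc] at hs
  exact Ioc_subset_Icc_self hs

theorem isCompact_image_add_vertical (hgc : HasCompactSupport g) :
    IsCompact ((fun x : (ℝ × ℝ) × ℝ => x.1 + (0, x.2)) '' (tsupport g ×ˢ Icc 0 c)) :=
  (hgc.isCompact.prod isCompact_Icc).image (by fun_prop)

theorem hasCompactSupport_verticalIntegral (hgc : HasCompactSupport g) (hc : 0 ≤ c) :
    HasCompactSupport (verticalIntegral g c) :=
  .of_support_subset_isCompact (isCompact_image_add_vertical hgc)
    (support_verticalIntegral_subset hc)

theorem tsupport_verticalIntegral_subset (hgc : HasCompactSupport g)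
    (hsupp : tsupport g ⊆ {q | 0 < q.2}) (hc : 0 ≤ c) :
    tsupport (verticalIntegral g c) ⊆ {q | 0 < q.2} := by
  refine (closure_minimal (support_verticalIntegral_subset hc)
    (isCompact_image_add_vertical hgc).isClosed).trans ?_
  rintro _ ⟨⟨q, s⟩, ⟨hq, hs⟩, rfl⟩
  exact add_pos_of_pos_of_nonneg (hsupp hq) hs.1

theorem integrable_invariantWeight_mul_comp [IsFiniteMeasureOnCompacts μ] (hg : ContDiff ℝ 1 g)
    (hgc : HasCompactSupport g) (hsupp : tsupport g ⊆ {q | 0 < q.2}) :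
    Integrable (fun p => invariantWeight p * g (recipCoord p)) μ :=
  (contDiff_invariantWeight_mul_comp hg hgc hsupp).continuous.integrable_of_hasCompactSupport
    (hasCompactSupport_invariantWeight_mul_comp hgc hsupp)

theorem integrable_invariantWeight_mul_comp_sub [IsFiniteMeasureOnCompacts μ]
    (hg : ContDiff ℝ 1 g) (hgc : HasCompactSupport g) (hsupp : tsupport g ⊆ {q | 0 < q.2})
    (hc : 0 ≤ c) : Integrable (fun p => invariantWeight p * g (recipCoord p - (0, c))) μ := by
  let shift : (ℝ × ℝ) ≃ₜ (ℝ × ℝ) := Homeomorph.subRight (0, c)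
  refine integrable_invariantWeight_mul_comp (g := g ∘ shift)
    (hg.comp (contDiff_id.sub contDiff_const)) (hgc.comp_homeomorph shift) ?_
  rw [tsupport_comp_eq_preimage g shift]
  intro q hq
  have hlt : 0 < q.2 - c := hsupp hq
  exact hc.trans_lt (sub_pos.1 hlt)

theorem HasIntegrationByParts.integral_comp_sub [IsFiniteMeasureOnCompacts μ]
    (hμ : HasIntegrationByParts μ) (hpos : ∀ᵐ p ∂μ, 0 < p.2) (hg : ContDiff ℝ 1 g)
    (hgc : HasCompactSupport g) (hsupp : tsupport g ⊆ {q | 0 < q.2}) (hc : 0 ≤ c) :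
    ∫ p, invariantWeight p * g (recipCoord p - (0, c)) ∂μ =
      ∫ p, invariantWeight p * g (recipCoord p) ∂μ := by
  have hzero := hμ.integral_fderiv_eq_zero hpos (contDiff_verticalIntegral hg hgc hc)
    (hasCompactSupport_verticalIntegral hgc hc) (tsupport_verticalIntegral_subset hgc hsupp hc)
  simp only [fderiv_verticalIntegral_apply hg hgc hc, mul_sub] at hzero
  rw [integral_sub (integrable_invariantWeight_mul_comp hg hgc hsupp)
    (integrable_invariantWeight_mul_comp_sub hg hgc hsupp hc)] at hzero
  exact (sub_eq_zero.1 hzero).symm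

end Invariance

section Extension

open Filter
open scoped Topology

variable {μ : Measure (ℝ × ℝ)} {f : ℝ × ℝ → ℝ} {c : ℝ}

/-- A smooth function whose superlevel sets `{1 ≤ n * exhaustion}` exhaust the upper half-plane by
compact sets. -/
def exhaustion (q : ℝ × ℝ) : ℝ :=
  q.2 / (1 + q.1 ^ 2 + q.2 ^ 2) ^ 2

/-- Smooth cutoff functions increasing to the indicator function of the upper half-plane. -/
def cutoff (n : ℕ) (q : ℝ × ℝ) : ℝ :=
  smoothTransition (n * exhaustion q - 1)

theorem contDiff_cutoff (n : ℕ) : ContDiff ℝ 1 (cutoff n) := by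
  have hne (q : ℝ × ℝ) : (1 + q.1 ^ 2 + q.2 ^ 2) ^ 2 ≠ 0 := by positivity
  have hexh : ContDiff ℝ 1 exhaustion := by
    unfold exhaustion
    fun_prop (disch := assumption)
  exact (smoothTransition.contDiff (n := 1)).comp ((contDiff_const.mul hexh).sub contDiff_const)

theorem cutoff_of_nonpos (n : ℕ) {q : ℝ × ℝ} (hq : q.2 ≤ 0) : cutoff n q = 0 := by
  have hexh : exhaustion q ≤ 0 := div_nonpos_of_nonpos_of_nonneg hq (by positivity)
  refine smoothTransition.zero_of_nonpos ?_
  linarith [mul_nonpos_of_nonneg_of_nonpos n.cast_nonneg hexh]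

theorem monotone_cutoff {q : ℝ × ℝ} (hq : 0 < q.2) : Monotone (cutoff · q) := by
  intro m n hmn
  have hexh : 0 ≤ exhaustion q := by unfold exhaustion; positivity
  refine smoothTransition.monotone (sub_le_sub_right ?_ 1)
  gcongr

theorem eventually_cutoff_eq_one {q : ℝ × ℝ} (hq : 0 < q.2) :
    ∀ᶠ n in atTop, cutoff n q = 1 := by
  have hexh : 0 < exhaustion q := by unfold exhaustion; positivity
  filter_upwards [(tendsto_natCast_atTop_atTop.atTop_mul_const hexh).eventually_ge_atTop 2]
    with n hn
  exact smoothTransition.one_of_one_le (by linarith)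

theorem mem_Icc_of_one_le_mul_exhaustion {n : ℕ} {q : ℝ × ℝ} (hq : 1 ≤ n * exhaustion q) :
    q ∈ Icc (-(n : ℝ), -(n : ℝ)) (n, n) := by
  set d := 1 + q.1 ^ 2 + q.2 ^ 2 with hd
  have hdpos : 0 < d := by positivity
  have hbound : d ^ 2 ≤ n * d := by
    rw [exhaustion, ← mul_div_assoc, le_div_iff₀ (by positivity), one_mul] at hq
    refine hq.trans (mul_le_mul_of_nonneg_left ?_ n.cast_nonneg)
    nlinarith [sq_nonneg (q.2 - 1), sq_nonneg q.1]
  have hdn : d ≤ n := by nlinarith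
  refine ⟨⟨?_, ?_⟩, ?_, ?_⟩ <;> simp only <;> nlinarith [sq_nonneg (q.1 - 1), sq_nonneg (q.1 + 1),
    sq_nonneg (q.2 - 1), sq_nonneg (q.2 + 1)]

theorem support_cutoff_subset (n : ℕ) :
    Function.support (cutoff n) ⊆ {q | 1 ≤ n * exhaustion q} := by
  intro q hq
  by_contra hlt
  exact hq (smoothTransition.zero_of_nonpos (sub_nonpos.2 (not_le.1 hlt).le))

theorem isCompact_superlevel_exhaustion (n : ℕ) : IsCompact {q | 1 ≤ n * exhaustion q} := by
  have hne (q : ℝ × ℝ) : (1 + q.1 ^ 2 + q.2 ^ 2) ^ 2 ≠ 0 := by positivity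
  have hexh : Continuous exhaustion := by
    unfold exhaustion
    fun_prop (disch := assumption)
  exact isCompact_Icc.of_isClosed_subset (isClosed_le continuous_const (by fun_prop))
    fun q hq => mem_Icc_of_one_le_mul_exhaustion hq

theorem hasCompactSupport_cutoff (n : ℕ) : HasCompactSupport (cutoff n) :=
  .of_support_subset_isCompact (isCompact_superlevel_exhaustion n) (support_cutoff_subset n)

theorem tsupport_cutoff_subset (n : ℕ) : tsupport (cutoff n) ⊆ {q | 0 < q.2} := by
  refine (closure_minimal (support_cutoff_subset n)
    (isCompact_superlevel_exhaustion n).isClosed).trans fun q hq => ?_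
  by_contra hnonpos
  have hexh : exhaustion q ≤ 0 :=
    div_nonpos_of_nonpos_of_nonneg (not_lt.1 hnonpos) (by positivity)
  linarith [mul_nonpos_of_nonneg_of_nonpos n.cast_nonneg hexh, show 1 ≤ n * exhaustion q from hq]

theorem contDiff_cutoff_mul (hf : ContDiffOn ℝ 1 f {q | 0 < q.2}) (n : ℕ) :
    ContDiff ℝ 1 fun q => cutoff n q * f q := by
  rw [contDiff_iff_contDiffAt]
  intro q
  by_cases hq : q ∈ tsupport (cutoff n)
  · have hopen : IsOpen {q : ℝ × ℝ | 0 < q.2} := isOpen_lt continuous_const continuous_snd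
    exact (contDiff_cutoff n).contDiffAt.mul
      (hf.contDiffAt (hopen.mem_nhds (tsupport_cutoff_subset n hq)))
  · refine (contDiffAt_const (c := (0 : ℝ))).congr_of_eventuallyEq ?_
    filter_upwards [notMem_tsupport_iff_eventuallyEq.1 hq] with q' hq'
    rw [hq', Pi.zero_apply, zero_mul]

theorem cutoff_mul_nonneg (hf : ∀ q, 0 < q.2 → 0 ≤ f q) (n : ℕ) (q : ℝ × ℝ) :
    0 ≤ cutoff n q * f q := by
  rcases lt_or_ge 0 q.2 with hq | hq
  · exact mul_nonneg (smoothTransition.nonneg _) (hf q hq)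
  · rw [cutoff_of_nonpos n hq, zero_mul]

theorem monotone_cutoff_mul (hf : ∀ q, 0 < q.2 → 0 ≤ f q) (q : ℝ × ℝ) :
    Monotone fun n => cutoff n q * f q := by
  rcases lt_or_ge 0 q.2 with hq | hq
  · exact (monotone_cutoff hq).mul_const (hf q hq)
  · simp only [cutoff_of_nonpos _ hq, zero_mul]
    exact monotone_const

theorem tendsto_cutoff_mul (f : ℝ × ℝ → ℝ) (q : ℝ × ℝ) :
    Tendsto (fun n => cutoff n q * f q) atTop (𝓝 ({q | 0 < q.2}.indicator f q)) := by
  refine tendsto_const_nhds.congr' ?_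
  rcases lt_or_ge 0 q.2 with hq | hq
  · filter_upwards [eventually_cutoff_eq_one hq] with n hn
    rw [hn, one_mul, indicator_of_mem (by exact hq)]
  · refine .of_forall fun n => ?_
    simp only [cutoff_of_nonpos n hq, zero_mul]
    exact indicator_of_notMem (by exact hq.not_gt) f

theorem tendsto_lintegral_cutoff_mul {α : Type*} [MeasurableSpace α] {ν : Measure α}
    {w : α → ℝ} {φ : α → ℝ × ℝ} (hw : Measurable w) (hw0 : 0 ≤ w) (hφ : Measurable φ)
    (hf : ContDiffOn ℝ 1 f {q | 0 < q.2}) (hf0 : ∀ q, 0 < q.2 → 0 ≤ f q) :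
    Tendsto (fun n => ∫⁻ x, ENNReal.ofReal (w x * (cutoff n (φ x) * f (φ x))) ∂ν) atTop
      (𝓝 (∫⁻ x, ENNReal.ofReal (w x * {q | 0 < q.2}.indicator f (φ x)) ∂ν)) := by
  refine lintegral_tendsto_of_tendsto_of_monotone (fun n => ?_) (.of_forall fun x m n hmn => ?_)
    (.of_forall fun x => ?_)
  · have hcont := (contDiff_cutoff_mul hf n).continuous
    exact (hw.mul (hcont.measurable.comp hφ)).ennreal_ofReal.aemeasurable
  · exact ENNReal.ofReal_le_ofReal
      (mul_le_mul_of_nonneg_left (monotone_cutoff_mul hf0 (φ x) hmn) (hw0 x))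
  · exact ENNReal.tendsto_ofReal ((tendsto_cutoff_mul f (φ x)).const_mul (w x))

theorem HasIntegrationByParts.lintegral_comp_sub [IsFiniteMeasureOnCompacts μ]
    (hμ : HasIntegrationByParts μ) (hpos : ∀ᵐ p ∂μ, 0 < p.2)
    (hf : ContDiffOn ℝ 1 f {q | 0 < q.2}) (hf0 : ∀ q, 0 < q.2 → 0 ≤ f q) (hc : 0 ≤ c) :
    ∫⁻ p, ENNReal.ofReal
        (invariantWeight p * {q | 0 < q.2}.indicator f (recipCoord p - (0, c))) ∂μ =
      ∫⁻ p, ENNReal.ofReal (invariantWeight p * {q | 0 < q.2}.indicator f (recipCoord p)) ∂μ := by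
  have hweight : 0 ≤ invariantWeight := fun p => (exp_pos _).le
  refine tendsto_nhds_unique (tendsto_lintegral_cutoff_mul measurable_invariantWeight hweight
    (measurable_recipCoord.sub_const _) hf hf0) ((tendsto_lintegral_cutoff_mul
    measurable_invariantWeight hweight measurable_recipCoord hf hf0).congr fun n => ?_)
  have hg := contDiff_cutoff_mul hf n
  have hgc : HasCompactSupport fun q => cutoff n q * f q := (hasCompactSupport_cutoff n).mul_right
  have hsupp : tsupport (fun q => cutoff n q * f q) ⊆ {q | 0 < q.2} :=
    tsupport_mul_subset_left.trans (tsupport_cutoff_subset n)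
  rw [← ofReal_integral_eq_lintegral_ofReal (integrable_invariantWeight_mul_comp hg hgc hsupp)
    (.of_forall fun p => mul_nonneg (hweight p) (cutoff_mul_nonneg hf0 n _)),
    ← ofReal_integral_eq_lintegral_ofReal (integrable_invariantWeight_mul_comp_sub hg hgc hsupp hc)
    (.of_forall fun p => mul_nonneg (hweight p) (cutoff_mul_nonneg hf0 n _)),
    hμ.integral_comp_sub hpos hg hgc hsupp hc]

theorem measurable_indicator_of_contDiffOn (hf : ContDiffOn ℝ 1 f {q | 0 < q.2}) :
    Measurable ({q | 0 < q.2}.indicator f) :=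
  measurable_of_tendsto_metrizable (fun n => (contDiff_cutoff_mul hf n).continuous.measurable)
    (tendsto_pi_nhds.2 fun q => tendsto_cutoff_mul f q)

theorem HasIntegrationByParts.integral_indicator_comp_sub [IsFiniteMeasureOnCompacts μ]
    (hμ : HasIntegrationByParts μ) (hpos : ∀ᵐ p ∂μ, 0 < p.2)
    (hf : ContDiffOn ℝ 1 f {q | 0 < q.2}) (hf0 : ∀ q, 0 < q.2 → 0 ≤ f q) (hc : 0 ≤ c) :
    ∫ p, invariantWeight p * {q | 0 < q.2}.indicator f (recipCoord p - (0, c)) ∂μ =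
      ∫ p, invariantWeight p * {q | 0 < q.2}.indicator f (recipCoord p) ∂μ := by
  have hnonneg (p q : ℝ × ℝ) : 0 ≤ invariantWeight p * {q | 0 < q.2}.indicator f q :=
    mul_nonneg (exp_pos _).le (indicator_nonneg hf0 q)
  have hmeas := measurable_indicator_of_contDiffOn hf
  rw [integral_eq_lintegral_of_nonneg_ae (.of_forall fun p => hnonneg p _)
      (by fun_prop), integral_eq_lintegral_of_nonneg_ae (.of_forall fun p => hnonneg p _)
      (by fun_prop), hμ.lintegral_comp_sub hpos hf hf0 hc]

end Extension

section Put

variable {a : ℝ} {p : ℝ × ℝ}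

/-- The put payoff `(a - x)⁺` divided by the weight `invariantWeight`, in the coordinates
`recipCoord` translated vertically so that the exercise region becomes the upper half-plane. -/
def weightedPut (a : ℝ) (q : ℝ × ℝ) : ℝ :=
  (a - (q.2 + a⁻¹)⁻¹) * exp (-2 * q.1 / (q.2 + a⁻¹) - 2 * (q.2 + a⁻¹))

theorem contDiffOn_weightedPut (ha : 0 < a) : ContDiffOn ℝ 1 (weightedPut a) {q | 0 < q.2} := by
  intro q hq
  have hq' : (0 : ℝ) < q.2 := hq
  have hne : q.2 + a⁻¹ ≠ 0 := by positivity
  unfold weightedPut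
  fun_prop (disch := assumption)

theorem weightedPut_nonneg (ha : 0 < a) (q : ℝ × ℝ) (hq : 0 < q.2) : 0 ≤ weightedPut a q := by
  refine mul_nonneg (sub_nonneg.2 ?_) (exp_pos _).le
  exact inv_le_of_inv_le₀ ha (le_add_of_nonneg_left hq.le)

theorem invariantWeight_mul_weightedPut_sub (ha : 0 < a) (hp : 0 < p.2) :
    invariantWeight p * {q | 0 < q.2}.indicator (weightedPut a) (recipCoord p - (0, a⁻¹)) =
      max (a - p.2) 0 := by
  have hregion : recipCoord p - (0, a⁻¹) ∈ {q : ℝ × ℝ | 0 < q.2} ↔ p.2 < a := by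
    simp only [recipCoord, mem_ofPred_eq, Prod.snd_sub, sub_pos, inv_lt_inv₀ ha hp]
  have hexponent : 2 * (p.1 + 1) / p.2 + (-2 * (p.1 / p.2 ^ 2) / p.2⁻¹ - 2 * p.2⁻¹) = 0 := by
    field_simp
    ring
  by_cases hlt : p.2 < a
  · rw [indicator_of_mem (hregion.2 hlt), max_eq_left (sub_pos.2 hlt).le]
    simp only [invariantWeight, weightedPut, recipCoord, Prod.fst_sub, Prod.snd_sub, sub_zero,
      sub_add_cancel, inv_inv]
    rw [mul_left_comm, ← exp_add, hexponent, exp_zero, mul_one]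
  · rw [indicator_of_notMem (mt hregion.1 hlt), mul_zero, max_eq_right (by linarith)]

theorem invariantWeight_mul_weightedPut (ha : 0 < a) (hp : 0 < p.2) :
    invariantWeight p * {q | 0 < q.2}.indicator (weightedPut a) (recipCoord p) =
      a ^ 2 * ((a + p.2)⁻¹ * exp (2 * p.1 / (a + p.2) - 2 / a)) := by
  have hpayoff : a - (p.2⁻¹ + a⁻¹)⁻¹ = a ^ 2 * (a + p.2)⁻¹ := by
    field_simp
    ring
  have hexponent : 2 * (p.1 + 1) / p.2 + (-2 * (p.1 / p.2 ^ 2) / (p.2⁻¹ + a⁻¹) -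
      2 * (p.2⁻¹ + a⁻¹)) = 2 * p.1 / (a + p.2) - 2 / a := by
    field_simp
    ring
  rw [indicator_of_mem (by exact inv_pos.2 hp)]
  simp only [invariantWeight, weightedPut, recipCoord]
  rw [mul_left_comm, ← exp_add, hexponent, hpayoff, mul_assoc]

theorem HasIntegrationByParts.integral_put {μ : Measure (ℝ × ℝ)} [IsFiniteMeasureOnCompacts μ]
    (hμ : HasIntegrationByParts μ) (hpos : ∀ᵐ p ∂μ, 0 < p.2) (ha : 0 < a) :
    ∫ p, max (a - p.2) 0 ∂μ =
      a ^ 2 * ∫ p, (a + p.2)⁻¹ * exp (2 * p.1 / (a + p.2) - 2 / a) ∂μ := by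
  have hinv := hμ.integral_indicator_comp_sub hpos (contDiffOn_weightedPut ha)
    (weightedPut_nonneg ha) (inv_pos.2 ha).le
  rw [← integral_const_mul, integral_congr_ae (hpos.mono fun p hp =>
    (invariantWeight_mul_weightedPut_sub ha hp).symm), hinv]
  exact integral_congr_ae (hpos.mono fun p hp => invariantWeight_mul_weightedPut ha hp)

end Put

section AsianOptions

variable {P B} {t : ℝ}

namespace IsBrownianMotion

theorem integral_M (hB : IsBrownianMotion P B) (ht : 0 ≤ t) : ∫ ω, M B t ω ∂P = 1 := by
  have hlaw := hB.gaussian_increments 0 t le_rfl ht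
  simp only [hB.start, sub_zero] at hlaw
  have hmgf := mgf_gaussianReal hlaw 1
  rw [mgf] at hmgf
  simp only [one_mul] at hmgf
  simp only [M, exp_sub, integral_div, hmgf]
  simp [ht]

theorem integrable_M (hB : IsBrownianMotion P B) (ht : 0 ≤ t) : Integrable (M B t) P :=
  .of_integral_ne_zero (by simp [hB.integral_M ht])

theorem A_pos (hB : IsBrownianMotion P B) (ht : 0 < t) (ω : Ω) : 0 < A B t ω :=
  intervalIntegral.intervalIntegral_pos_of_pos ((hB.continuous_M ω).intervalIntegrable 0 t)
    (fun _ => exp_pos _) ht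

theorem integrable_uncurry_M (hB : IsBrownianMotion P B) (t : ℝ) :
    Integrable (Function.uncurry (M B)) ((volume.restrict (Ioc 0 t)).prod P) := by
  have := hB.isProbabilityMeasure
  have hmeas : Measurable (Function.uncurry (M B)) :=
    measurable_uncurry_of_continuous_of_measurable hB.continuous_M hB.measurable_M
  have hnorm (s : ℝ) (hs : s ∈ Ioc 0 t) : ∫ ω, ‖M B s ω‖ ∂P = 1 := by
    simp only [norm_of_nonneg (exp_pos _).le, M, ← hB.integral_M hs.1.le]
  refine (integrable_prod_iff hmeas.aestronglyMeasurable).2 ⟨?_, ?_⟩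
  · exact ae_restrict_of_forall_mem measurableSet_Ioc fun s hs => hB.integrable_M hs.1.le
  · exact (integrableOn_congr_fun hnorm measurableSet_Ioc).2 (integrable_const 1)

theorem integrable_A (hB : IsBrownianMotion P B) (ht : 0 ≤ t) : Integrable (A B t) P := by
  have := hB.isProbabilityMeasure
  refine (hB.integrable_uncurry_M t).integral_prod_right.congr (.of_forall fun ω => ?_)
  exact (intervalIntegral.integral_of_le ht).symm

theorem integral_A (hB : IsBrownianMotion P B) (ht : 0 ≤ t) : ∫ ω, A B t ω ∂P = t := by
  have := hB.isProbabilityMeasure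
  calc ∫ ω, A B t ω ∂P = ∫ ω, (∫ s in Ioc 0 t, M B s ω) ∂P := by
        simp only [A, M, intervalIntegral.integral_of_le ht]
    _ = ∫ s in Ioc 0 t, ∫ ω, M B s ω ∂P :=
        (integral_integral_swap (hB.integrable_uncurry_M t)).symm
    _ = ∫ s in Ioc 0 t, 1 :=
        setIntegral_congr_fun measurableSet_Ioc fun s hs => hB.integral_M hs.1.le
    _ = t := by simp [ht]

theorem integral_put (hB : IsBrownianMotion P B) (ht : 0 < t) {a : ℝ} (ha : 0 < a) :
    ∫ ω, max (a - A B t ω) 0 ∂P =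
      a ^ 2 * ∫ ω, (a + A B t ω)⁻¹ * exp (2 * M B t ω / (a + A B t ω) - 2 / a) ∂P := by
  have := hB.isProbabilityMeasure
  have hmeas := (hB.measurable_M_A ht.le).aemeasurable (μ := P)
  have hpos : ∀ᵐ p ∂P.map fun ω => (M B t ω, A B t ω), 0 < p.2 :=
    (ae_map_iff hmeas (measurableSet_lt measurable_const measurable_snd)).2
      (.of_forall fun ω => hB.A_pos ht ω)
  have hput := (hB.hasIntegrationByParts ht).integral_put hpos ha
  rwa [integral_map hmeas (by fun_prop), integral_map hmeas (by fun_prop)] at hput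

theorem integral_call (hB : IsBrownianMotion P B) (ht : 0 ≤ t) (a : ℝ) :
    ∫ ω, max (A B t ω - a) 0 ∂P = t - a + ∫ ω, max (a - A B t ω) 0 ∂P := by
  have := hB.isProbabilityMeasure
  have hA := hB.integrable_A ht
  have hparity (ω : Ω) : max (A B t ω - a) 0 = A B t ω - a + max (a - A B t ω) 0 := by
    grind
  simp only [hparity]
  have hforward : Integrable (fun ω => A B t ω - a) P := hA.sub (integrable_const a)
  have hput : Integrable (fun ω => max (a - A B t ω) 0) P :=
    ((integrable_const a).sub hA).pos_part
  rw [integral_add hforward hput, integral_sub hA (integrable_const a), hB.integral_A ht,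
    integral_const, probReal_univ, one_smul]

end IsBrownianMotion

end AsianOptions

theorem asian_call_price (hB : IsBrownianMotion P B)
    (S₀ κ σ r τ : ℝ) (hS : 0 < S₀) (hκ : 0 < κ) (hσ : 0 < σ) (hτ : 0 < τ) :
    S₀ / (τ * σ ^ 2) * Real.exp (-r * τ) *
        (∫ ω, max (A B (σ ^ 2 * τ) ω - σ ^ 2 * κ * τ / S₀) 0 ∂P)
      = S₀ * Real.exp (-r * τ) *
        (1 - κ / S₀ + σ ^ 2 * κ ^ 2 * τ / S₀ ^ 2 *
          ∫ ω, (σ ^ 2 * κ * τ / S₀ + A B (τ * σ ^ 2) ω)⁻¹ *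
                Real.exp (2 * M B (τ * σ ^ 2) ω / (σ ^ 2 * κ * τ / S₀ + A B (τ * σ ^ 2) ω)
                  - 2 / (σ ^ 2 * κ * τ / S₀)) ∂P) := by
  have ht : 0 < σ ^ 2 * τ := by positivity
  have ha : 0 < σ ^ 2 * κ * τ / S₀ := by positivity
  rw [mul_comm τ (σ ^ 2), hB.integral_call ht.le, hB.integral_put ht ha]
  field_simp
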